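/- There is a constant c > 0 such that every satisfiable CTL* formula θ has a model with at most 2^{2^{c·|θ|}} states in which every state has at most 2^{|θ|} successors, where |θ| denotes the number of subformulas of θ. -/

import Mathlib

/-- Branching-time formulas in negation normal form. -/
inductive Form : Type where
  | tt : Form
  | ff : Form
  | prop : ℕ → Form
  | nprop : ℕ → Form
  | or : Form → Form → Form
  | and : Form → Form → Form
  | next : Form → Form
  | unt : Form → Form → Form
  | rel : Form → Form → Form
  | ex : Form → Form
  | al : Form → Form
deriving DecidableEq

namespace Form

/-- The set of subformulas of a formula. -/
def subf : Form → Finset Form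
  | .tt => {.tt}
  | .ff => {.ff}
  | .prop p => {.prop p}
  | .nprop p => {.nprop p}
  | .or a b => insert (.or a b) (a.subf ∪ b.subf)
  | .and a b => insert (.and a b) (a.subf ∪ b.subf)
  | .next a => insert (.next a) a.subf
  | .unt a b => insert (.unt a b) (a.subf ∪ b.subf)
  | .rel a b => insert (.rel a b) (a.subf ∪ b.subf)
  | .ex a => insert (.ex a) a.subf
  | .al a => insert (.al a) a.subf

/-- Literals are `tt`, `ff`, `p` and `¬p`. -/
def IsLiteral : Form → Prop
  | .tt => True
  | .ff => True
  | .prop _ => True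
  | .nprop _ => True
  | _ => False

/-- A formula of the form `Xφ`. -/
def IsNext : Form → Prop
  | .next _ => True
  | _ => False

/-- Remove a frontal `X`. -/
def unX : Form → Form
  | .next a => a
  | a => a

end Form

/-- The Fischer-Ladner closure of a formula: its subformulas together with
`X(φ U ψ)` for every subformula `φ U ψ` and `X(φ R ψ)` for every subformula `φ R ψ`. -/
def FL (θ : Form) : Finset Form :=
  θ.subf ∪ θ.subf.image (fun ψ =>
    match ψ with
    | .unt a b => Form.next (.unt a b)
    | .rel a b => Form.next (.rel a b)
    | _ => θ)

/-- A (total) transition system with a designated initial state and a labeling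
of states with sets of propositional constants. -/
structure TS (S : Type) where
  init : S
  step : S → S → Prop
  total : ∀ s, ∃ t, step s t
  label : S → Set ℕ

/-- An infinite path through a transition system. -/
structure TS.Path {S : Type} (T : TS S) where
  seq : ℕ → S
  valid : ∀ i, T.step (seq i) (seq (i + 1))

/-- The suffix `π^k` of a path `π`. -/
def TS.Path.suffix {S : Type} {T : TS S} (π : T.Path) (k : ℕ) : T.Path :=
  ⟨fun i => π.seq (k + i), fun i => π.valid (k + i)⟩

/-- Satisfaction of a branching-time formula on a path of a transition system. -/
def Sat {S : Type} (T : TS S) : T.Path → Form → Prop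
  | _, .tt => True
  | _, .ff => False
  | π, .prop p => p ∈ T.label (π.seq 0)
  | π, .nprop p => p ∉ T.label (π.seq 0)
  | π, .or a b => Sat T π a ∨ Sat T π b
  | π, .and a b => Sat T π a ∧ Sat T π b
  | π, .next a => Sat T (π.suffix 1) a
  | π, .unt a b => ∃ k, Sat T (π.suffix k) b ∧ ∀ j < k, Sat T (π.suffix j) a
  | π, .rel a b => ∀ k, Sat T (π.suffix k) b ∨ ∃ j < k, Sat T (π.suffix j) a
  | π, .ex a => ∃ π' : T.Path, π'.seq 0 = π.seq 0 ∧ Sat T π' a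
  | π, .al a => ∀ π' : T.Path, π'.seq 0 = π.seq 0 → Sat T π' a

/-- A state formula: satisfaction only depends on the first state of the path. -/
def IsStateForm (φ : Form) : Prop :=
  ∀ (S : Type) (T : TS S) (π π' : T.Path), π.seq 0 = π'.seq 0 → (Sat T π φ ↔ Sat T π' φ)

/-- A (state) formula is satisfiable if it holds at the initial state of some
transition system. -/
def Satisfiable (φ : Form) : Prop :=
  ∃ (S : Type) (T : TS S) (π : T.Path), π.seq 0 = T.init ∧ Sat T π φ

/-- Equivalence of branching-time formulas. -/
def FormEquiv (φ ψ : Form) : Prop :=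
  ∀ (S : Type) (T : TS S) (π : T.Path), Sat T π φ ↔ Sat T π ψ


section Fold
open Classical

variable {O : Type*} [LinearOrder O]

/-- Update of an age-ordered list of ranks with a new finite set of ranks. -/
noncomputable def updL : List O → Finset O → List O
  | [], R => R.toList
  | ρ :: L, R =>
    if h : (R.filter (· ≤ ρ)).Nonempty then
      (R.filter (· ≤ ρ)).max' h :: updL L (R.erase ((R.filter (· ≤ ρ)).max' h))
    else updL L R

lemma updL_mem (L : List O) : ∀ (R : Finset O) (y : O), y ∈ updL L R ↔ y ∈ R := by
  induction L with
  | nil => intro R y; simp [updL]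
  | cons ρ L ih =>
    intro R y
    unfold updL
    split_ifs with h
    · have hm := Finset.max'_mem _ h
      rw [List.mem_cons, ih, Finset.mem_erase]
      have := (Finset.mem_filter.1 hm).1
      constructor
      · rintro (rfl | h2)
        · exact this
        · exact h2.2
      · intro hy
        by_cases hyy : y = (R.filter (· ≤ ρ)).max' h
        · exact Or.inl hyy
        · exact Or.inr ⟨hyy, hy⟩
    · exact ih R y

lemma updL_nodup (L : List O) : ∀ (R : Finset O), (updL L R).Nodup := by
  induction L with
  | nil => intro R; simpa [updL] using R.nodup_toList
  | cons ρ L ih =>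
    intro R
    unfold updL
    split_ifs with h
    · rw [List.nodup_cons]
      refine ⟨?_, ih _⟩
      rw [updL_mem]; simp
    · exact ih R

/-- First position carrying a value at least `a`. -/
noncomputable def pos (a : O) (L : List O) : ℕ := L.findIdx (fun y => decide (a ≤ y))

lemma pos_cons (a ρ : O) (L : List O) :
    pos a (ρ :: L) = if a ≤ ρ then 0 else pos a L + 1 := by
  unfold pos
  rw [List.findIdx_cons]
  by_cases h : a ≤ ρ <;> simp [h]

lemma pos_updL (L : List O) : ∀ (R : Finset O) (a b : O), a ∈ L → b ∈ R → b ≤ a →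
    pos b (updL L R) ≤ pos a L := by
  induction L with
  | nil => intro R a b h; simp at h
  | cons ρ L ih =>
    intro R a b ha hb hba
    rw [pos_cons]
    unfold updL
    have haL : ¬ a ≤ ρ → a ∈ L := by
      intro haρ
      rcases List.mem_cons.1 ha with h4 | h4
      · exact absurd h4.le haρ
      · exact h4
    by_cases h : (R.filter (· ≤ ρ)).Nonempty
    · rw [dif_pos h, pos_cons]
      by_cases haρ : a ≤ ρ
      · rw [if_pos]
        · simp
        · have hbm : b ∈ R.filter (· ≤ ρ) := Finset.mem_filter.2 ⟨hb, hba.trans haρ⟩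
          exact Finset.le_max' _ _ hbm
      · rw [if_neg haρ]
        split_ifs with h3
        · simp
        · have hne : b ≠ (R.filter (· ≤ ρ)).max' h := fun h5 => h3 h5.le
          exact Nat.succ_le_succ (ih _ a b (haL haρ) (Finset.mem_erase.2 ⟨hne, hb⟩) hba)
    · rw [dif_neg h]
      by_cases haρ : a ≤ ρ
      · exact (h ⟨b, Finset.mem_filter.2 ⟨hb, hba.trans haρ⟩⟩).elim
      · rw [if_neg haρ]
        exact (ih R a b (haL haρ) hb hba).trans (Nat.le_succ _)

lemma pos_updL_del (ρ : O) (L : List O) (R : Finset O) (a b : O) (ha : a ∈ ρ :: L) (hb : b ∈ R)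
    (hba : b ≤ a) (h : ¬ (R.filter (· ≤ ρ)).Nonempty) :
    pos b (updL (ρ :: L) R) < pos a (ρ :: L) := by
  have haρ : ¬ a ≤ ρ := fun h1 => h ⟨b, Finset.mem_filter.2 ⟨hb, hba.trans h1⟩⟩
  have haL : a ∈ L := by
    rcases List.mem_cons.1 ha with h4 | h4
    · exact absurd h4.le haρ
    · exact h4
  rw [pos_cons, if_neg haρ]
  unfold updL
  rw [dif_neg h]
  exact Nat.lt_succ_of_le (pos_updL L R a b haL hb hba)

lemma pos_map (f : O → O) (L : List O) (b : O) (hf : ∀ y ∈ L, (f b ≤ f y ↔ b ≤ y)) :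
    pos (f b) (L.map f) = pos b L := by
  induction L with
  | nil => rfl
  | cons ρ L ih =>
    rw [List.map_cons, pos_cons, pos_cons, ih (fun y hy => hf y (List.mem_cons_of_mem _ hy))]
    simp only [hf ρ List.mem_cons_self]

/-- The hypotheses of the combinatorial core. -/
structure Hyp (L L' : ℕ → List O) (R : ℕ → Finset O) (a b : ℕ → O) : Prop where
  ha : ∀ t, a t ∈ L t
  hb : ∀ t, b t ∈ R t
  hba : ∀ t, b t ≤ a t
  hL : ∀ t, L' t = updL (L t) (R t)
  hf : ∀ t, ∃ f : O → O, (∀ x ∈ L' t, ∀ y ∈ L' t, x < y ↔ f x < f y) ∧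
    L (t+1) = (L' t).map f ∧ a (t+1) = f (b t)
  hlex : ∀ t, ¬ List.Shortlex (· < ·) (L' t) (L (t+1))
  hstr : ∀ t, ∃ s ≥ t, b s < a s

lemma Hyp.shift {L L' : ℕ → List O} {R : ℕ → Finset O} {a b : ℕ → O} (H : Hyp L L' R a b) (k : ℕ) :
    Hyp (fun t => L (k+t)) (fun t => L' (k+t)) (fun t => R (k+t)) (fun t => a (k+t))
      (fun t => b (k+t)) where
  ha t := H.ha _
  hb t := H.hb _
  hba t := H.hba _
  hL t := H.hL _
  hf t := H.hf _
  hlex t := H.hlex _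
  hstr t := by
    obtain ⟨s, hs, h⟩ := H.hstr (k+t)
    refine ⟨s - k, by omega, ?_⟩
    have : k + (s - k) = s := by omega
    simpa [this] using h

lemma antitone_eventually_const {P : Type*} [Preorder P] [WellFoundedLT P] (u : ℕ → P)
    (_h : ∀ t, u (t+1) ≤ u t) : ∃ T, ∀ t ≥ T, ¬ u t < u T := by
  obtain ⟨m, ⟨T, rfl⟩, hm⟩ := WellFounded.has_min (wellFounded_lt (α := P)) (Set.range u) ⟨u 0, 0, rfl⟩
  exact ⟨T, fun t _ => hm _ ⟨t, rfl⟩⟩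

lemma Hyp.pos_le {L L' : ℕ → List O} {R : ℕ → Finset O} {a b : ℕ → O} (H : Hyp L L' R a b) (t : ℕ) :
    pos (a (t+1)) (L (t+1)) = pos (b t) (L' t) := by
  obtain ⟨f, hf, h1, h2⟩ := H.hf t
  rw [h1, h2]
  apply pos_map
  intro y hy
  have hbL : b t ∈ L' t := by rw [H.hL, updL_mem]; exact H.hb t
  rw [← not_lt, ← not_lt, hf y hy _ hbL]

lemma core [WellFoundedLT O] (m : ℕ) : ∀ (L L' : ℕ → List O) (R : ℕ → Finset O) (a b : ℕ → O),
    Hyp L L' R a b → (∀ t, (L t).length ≤ m) → False := by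
  induction m with
  | zero =>
    intro L L' R a b H hm
    have := List.length_pos_of_mem (H.ha 0)
    have := hm 0
    omega
  | succ m ih =>
    intro L L' R a b H hm
    -- eventually no deletions at the head
    obtain ⟨T1, hT1⟩ : ∃ T, ∀ t ≥ T, ¬ pos (b t) (L' t) < pos (a t) (L t) := by
      have mono : ∀ t, pos (a (t+1)) (L (t+1)) ≤ pos (a t) (L t) := by
        intro t
        rw [H.pos_le t, H.hL]
        exact pos_updL _ _ _ _ (H.ha t) (H.hb t) (H.hba t)
      have anti : Antitone (fun t => pos (a t) (L t)) := antitone_nat_of_succ_le mono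
      obtain ⟨T, hT⟩ := antitone_eventually_const (fun t => pos (a t) (L t)) mono
      refine ⟨T, fun t ht h => ?_⟩
      rw [← H.pos_le t] at h
      exact hT (t+1) (by omega) (lt_of_lt_of_le h (anti ht))
    replace H := H.shift T1
    replace hm : ∀ t, (L (T1 + t)).length ≤ m + 1 := fun t => hm _
    replace hT1 : ∀ t, ¬ pos (b (T1 + t)) (L' (T1 + t)) < pos (a (T1 + t)) (L (T1 + t)) :=
      fun t => hT1 _ (by omega)
    generalize hLe : (fun t => L (T1 + t)) = L1 at *
    generalize hLe' : (fun t => L' (T1 + t)) = L1' at *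
    generalize hRe : (fun t => R (T1 + t)) = R1 at *
    generalize hae : (fun t => a (T1 + t)) = a1 at *
    generalize hbe : (fun t => b (T1 + t)) = b1 at *
    have hm1 : ∀ t, (L1 t).length ≤ m + 1 := by subst hLe; exact hm
    have hT2 : ∀ t, ¬ pos (b1 t) (L1' t) < pos (a1 t) (L1 t) := by
      subst hLe hLe' hae hbe; exact hT1
    clear hm hT1 hLe hLe' hRe hae hbe
    clear L L' R a b
    have hne : ∀ t, ∃ ρ M, L1 t = ρ :: M := fun t =>
      List.exists_cons_of_ne_nil (List.ne_nil_of_mem (H.ha t))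
    choose ρ M hM using hne
    have hdel : ∀ t, ((R1 t).filter (· ≤ ρ t)).Nonempty := by
      intro t
      by_contra h
      apply hT2 t
      rw [H.hL t, hM t]
      exact pos_updL_del _ _ _ _ _ (hM t ▸ H.ha t) (H.hb t) (H.hba t) h
    have hL' : ∀ t, ∃ x M', x ≤ ρ t ∧ L1' t = x :: M' ∧ M' = updL (M t) ((R1 t).erase x) := by
      intro t
      refine ⟨((R1 t).filter (· ≤ ρ t)).max' (hdel t), _, ?_, ?_, rfl⟩
      · exact (Finset.mem_filter.1 (Finset.max'_mem _ (hdel t))).2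
      · rw [H.hL t, hM t, updL, dif_pos (hdel t)]
    choose ρ' M' hρ' hL1' hM' using hL'
    have hlen : ∀ t, (M' t).length = (M (t+1)).length := by
      intro t
      obtain ⟨f, -, h1, -⟩ := H.hf t
      rw [hL1', hM] at h1
      have := congrArg List.length h1
      simpa using this.symm
    have hlex1 : ∀ t, ρ (t+1) ≤ ρ' t := by
      intro t
      by_contra h
      apply H.hlex t
      rw [hL1', hM, List.shortlex_def]
      right
      refine ⟨by simp [hlen], List.Lex.rel (not_le.1 h)⟩
    have hlex2 : ∀ t, ρ (t+1) = ρ' t → ¬ List.Shortlex (· < ·) (M' t) (M (t+1)) := by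
      intro t he h
      apply H.hlex t
      rw [hL1', hM, he]
      rw [List.shortlex_def] at h ⊢
      rcases h with h | h
      · left; simpa using h
      · right
        exact ⟨by simpa using h.1, List.Lex.cons h.2⟩
    have hρ : ∀ t, ρ (t+1) ≤ ρ t := fun t => (hlex1 t).trans (hρ' t)
    have hanti : Antitone ρ := antitone_nat_of_succ_le hρ
    obtain ⟨T, hT⟩ := antitone_eventually_const ρ hρ
    have hc : ∀ t ≥ T, ρ t = ρ T := fun t ht => le_antisymm (hanti ht) (not_lt.1 (hT t ht))
    have hc' : ∀ t ≥ T, ρ' t = ρ T := fun t ht =>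
      le_antisymm ((hρ' t).trans (hc t ht).le) ((hc (t+1) (by omega)).symm.le.trans (hlex1 t))
    have hcmp : ∀ t ≥ T, (b1 t < ρ T ↔ a1 (t+1) < ρ T) ∧ (ρ T < b1 t ↔ ρ T < a1 (t+1)) := by
      intro t ht
      obtain ⟨f, h0, h1, h2⟩ := H.hf t
      have hbL : b1 t ∈ L1' t := by rw [H.hL, updL_mem]; exact H.hb t
      have hρL : ρ T ∈ L1' t := by rw [hL1', hc' t ht]; simp
      have hfρ : f (ρ T) = ρ T := by
        rw [hL1', hM, hc' t ht, hc (t+1) (by omega)] at h1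
        simp at h1
        exact h1.1.symm
      constructor
      · rw [h0 _ hbL _ hρL, hfρ, h2]
      · rw [h0 _ hρL _ hbL, hfρ, h2]
    have hlt : ∀ s ≥ T, a1 s < ρ T → ∀ t ≥ s, a1 t < ρ T := by
      intro s hs h t ht
      induction t, ht using Nat.le_induction with
      | base => exact h
      | succ t ht ih => exact ((hcmp t (by omega)).1).1 (lt_of_le_of_lt (H.hba t) ih)
    obtain ⟨T2, hT2T, hT2a⟩ : ∃ T2 ≥ T, ∀ t ≥ T2, a1 t ≠ ρ T := by
      by_cases hex : ∃ t ≥ T, a1 t ≤ ρ T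
      · obtain ⟨t, ht, hat⟩ := hex
        have hle : ∀ s ≥ t, a1 s ≤ ρ T := by
          intro s hs
          induction s, hs using Nat.le_induction with
          | base => exact hat
          | succ s hs ih =>
            have := (hcmp s (by omega)).2
            rw [← not_lt, ← this, not_lt]
            exact (H.hba s).trans ih
        obtain ⟨s, hs, hst⟩ := H.hstr t
        refine ⟨s+1, by omega, fun u hu => ?_⟩
        apply ne_of_lt
        apply hlt (s+1) (by omega) _ u hu
        exact (hcmp s (by omega)).1.1 (lt_of_lt_of_le hst (hle s hs))
      · push Not at hex
        exact ⟨T, le_rfl, fun t ht => (hex t ht).ne'⟩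
    have hb2 : ∀ t ≥ T2, b1 t ≠ ρ T := by
      intro t ht he
      have h1 := hcmp t (by omega)
      rw [he] at h1
      simp at h1
      exact hT2a (t+1) (by omega) (le_antisymm h1.2 h1.1)
    refine ih (fun t => M (T2 + t)) (fun t => M' (T2 + t)) (fun t => (R1 (T2+t)).erase (ρ T))
      (fun t => a1 (T2 + t)) (fun t => b1 (T2 + t)) ?_ ?_
    · refine ⟨?_, ?_, ?_, ?_, ?_, ?_, ?_⟩
      · intro t
        have := H.ha (T2 + t)
        rw [hM, hc _ (by omega)] at this
        exact (List.mem_cons.1 this).resolve_left (hT2a _ (by omega))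
      · intro t
        exact Finset.mem_erase.2 ⟨hb2 _ (by omega), H.hb _⟩
      · intro t; exact H.hba _
      · intro t
        rw [hM', hc' (T2 + t) (by omega)]
      · intro t
        obtain ⟨f, h0, h1, h2⟩ := H.hf (T2 + t)
        refine ⟨f, ?_, ?_, h2⟩
        · intro x hx y hy
          apply h0
          · rw [hL1']; exact List.mem_cons_of_mem _ hx
          · rw [hL1']; exact List.mem_cons_of_mem _ hy
        · rw [hL1', hM] at h1
          simp only [List.map_cons, List.cons.injEq] at h1
          exact h1.2
      · intro t
        apply hlex2
        rw [hc _ (by omega), hc' _ (by omega)]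
      · exact (H.shift T2).hstr
    · intro t
      have := hm1 (T2 + t)
      rw [hM] at this
      simpa using this

end Fold

section Fold2
open Classical

/-- Existence of ordinal ranks. -/
lemma rank_exists {Y : Type} (E S : Y → Y → Prop) (hSE : ∀ x y, S x y → E x y)
    (hno : ∀ y : ℕ → Y, (∀ t, E (y t) (y (t+1))) → ¬ ∀ t, ∃ s ≥ t, S (y s) (y (s+1))) :
    ∃ r : Y → Ordinal.{0}, (∀ x y, E x y → r y ≤ r x) ∧ (∀ x y, S x y → r y < r x) := by
  let P : Y → Y → Prop := fun z y => ∃ u w, Relation.ReflTransGen E y u ∧ S u w ∧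
    Relation.ReflTransGen E w z
  have hwf : WellFounded P := by
    by_contra hnwf
    have hbad : ∃ y, ¬ Acc P y := by
      by_contra h
      push Not at h
      exact hnwf ⟨h⟩
    obtain ⟨y0, hy0⟩ := hbad
    -- distance to the next strict step
    let Dn : ℕ → Y → Prop := fun n => Nat.rec (fun y => ∃ w, S y w ∧ ¬ Acc P w)
      (fun _ D y => ∃ z, E y z ∧ D z) n
    have hD0 : ∀ y, Dn 0 y ↔ ∃ w, S y w ∧ ¬ Acc P w := fun y => Iff.rfl
    have hDs : ∀ n y, Dn (n+1) y ↔ ∃ z, E y z ∧ Dn n z := fun n y => Iff.rfl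
    have hback : ∀ y z, E y z → ¬ Acc P z → ¬ Acc P y := by
      intro y z hyz hz hy
      apply hz
      refine ⟨_, fun x hx => ?_⟩
      obtain ⟨u, w, h1, h2, h3⟩ := hx
      exact hy.inv ⟨u, w, Relation.ReflTransGen.head hyz h1, h2, h3⟩
    have hback' : ∀ y z, Relation.ReflTransGen E y z → ¬ Acc P z → ¬ Acc P y := by
      intro y z hyz hz
      induction hyz using Relation.ReflTransGen.head_induction_on with
      | refl => exact hz
      | head h _ ih => exact hback _ _ h ih
    have hDn : ∀ n y, Dn n y → ¬ Acc P y := by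
      intro n
      induction n with
      | zero => rintro y ⟨w, hw, ha⟩; exact hback _ _ (hSE _ _ hw) ha
      | succ n ih => rintro y ⟨z, hz, hd⟩; exact hback _ _ hz (ih z hd)
    have hex : ∀ y, ¬ Acc P y → ∃ n, Dn n y := by
      intro y hy
      have : ∃ z, P z y ∧ ¬ Acc P z := by
        by_contra h
        push Not at h
        exact hy ⟨_, h⟩
      obtain ⟨z, ⟨u, w, h1, h2, h3⟩, hz⟩ := this
      have hu : Dn 0 u := ⟨w, h2, hback' _ _ h3 hz⟩
      clear h2
      induction h1 using Relation.ReflTransGen.head_induction_on with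
      | refl => exact ⟨0, hu⟩
      | head h _ ih =>
        rename_i a c hcu
        obtain ⟨n, hn⟩ := ih (hDn 0 _ hu |> hback' _ _ hcu)
        exact ⟨n+1, _, h, hn⟩
    let B := {y // ¬ Acc P y}
    have hℓ : ∀ y : B, ∃ n, Dn n y.1 ∧ ∀ k, Dn k y.1 → n ≤ k := fun y =>
      ⟨sInf {n | Dn n y.1}, Nat.sInf_mem (s := {n | Dn n y.1}) (hex y.1 y.2),
        fun _ hk => Nat.sInf_le hk⟩
    choose ℓ hℓ1 hℓ2 using hℓ
    have hstep : ∀ y : B, ∃ z : B, E y.1 z.1 ∧ (S y.1 z.1 ∨ ℓ z < ℓ y) := by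
      intro y
      have hs : Dn (ℓ y) y.1 := hℓ1 y
      rcases hn : ℓ y with _ | n
      · rw [hn] at hs
        obtain ⟨w, hw, ha⟩ := hs
        exact ⟨⟨w, ha⟩, hSE _ _ hw, Or.inl hw⟩
      · rw [hn] at hs
        obtain ⟨z, hz, hd⟩ := hs
        refine ⟨⟨z, hDn _ _ hd⟩, hz, Or.inr ?_⟩
        exact Nat.lt_succ_of_le (hℓ2 ⟨z, hDn _ _ hd⟩ _ hd)
    choose nx hnx1 hnx2 using hstep
    let y : ℕ → B := fun t => Nat.rec ⟨y0, hy0⟩ (fun _ z => nx z) t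
    have hy : ∀ t, y (t+1) = nx (y t) := fun t => rfl
    apply hno (fun t => (y t).1)
    · intro t
      simp only [hy]
      exact hnx1 _
    · intro t
      by_contra h
      push Not at h
      have hdec : ∀ s ≥ t, ℓ (y (s+1)) < ℓ (y s) := by
        intro s hs
        rw [hy]
        apply (hnx2 (y s)).resolve_left
        exact h s hs
      have : ∀ k, ℓ (y (t+k)) + k ≤ ℓ (y t) := by
        intro k
        induction k with
        | zero => simp
        | succ k ih =>
          have := hdec (t+k) (by omega)
          have h2 : t + (k+1) = t + k + 1 := rfl
          rw [h2]
          omega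
      have := this (ℓ (y t) + 1)
      omega
  have : IsWellFounded Y P := ⟨hwf⟩
  refine ⟨IsWellFounded.rank P, ?_, ?_⟩
  · intro x y hxy
    rw [IsWellFounded.rank_eq]
    apply Ordinal.iSup_le
    rintro ⟨z, u, w, h1, h2, h3⟩
    rw [Order.succ_le_iff]
    exact IsWellFounded.rank_lt_of_rel ⟨u, w, Relation.ReflTransGen.head hxy h1, h2, h3⟩
  · intro x y hxy
    exact IsWellFounded.rank_lt_of_rel ⟨x, y, Relation.ReflTransGen.refl, hxy,
      Relation.ReflTransGen.refl⟩

/-- Nodes together with an age-ordered list of their ranks. -/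
structure FNode (X Q O : Type*) [Fintype Q] (r : X → Q → O) where
  x : X
  L : List O
  nodup : L.Nodup
  mem : ∀ y, y ∈ L ↔ ∃ q, r x q = y

variable {X D Q Λ O : Type*} [Fintype Q] [LinearOrder O]

/-- Successor of a node. -/
noncomputable def FNode.nx {r : X → Q → O} (succ : X → D → X) (n : FNode X Q O r) (d : D) :
    FNode X Q O r where
  x := succ n.x d
  L := updL n.L (Finset.univ.image (r (succ n.x d)))
  nodup := updL_nodup _ _
  mem y := by rw [updL_mem]; simp

lemma FNode.len {r : X → Q → O} (n : FNode X Q O r) : n.L.length ≤ Fintype.card Q := by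
  have h1 : n.L.toFinset ⊆ Finset.univ.image (r n.x) := by
    intro y hy
    rw [List.mem_toFinset, n.mem] at hy
    simpa using hy
  rw [← List.toFinset_card_of_nodup n.nodup]
  exact (Finset.card_le_card h1).trans Finset.card_image_le

/-- The finite abstraction of a node. -/
noncomputable def FNode.code {r : X → Q → O} (lab : X → Λ) (n : FNode X Q O r) :
    Λ × (Q → Q → Prop) × (Q → Fin (Fintype.card Q + 1)) :=
  (lab n.x, fun q q' => r n.x q < r n.x q', fun q => ⟨n.L.idxOf (r n.x q),
    Nat.lt_succ_of_le (List.idxOf_le_length.trans n.len)⟩)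

lemma FNode.code_map {r : X → Q → O} (lab : X → Λ) (n n' : FNode X Q O r)
    (h : n'.code lab = n.code lab) :
    ∃ f : O → O, (∀ q, f (r n'.x q) = r n.x q) ∧
      (∀ x ∈ n'.L, ∀ y ∈ n'.L, x < y ↔ f x < f y) ∧ n.L = n'.L.map f := by
  simp only [FNode.code, Prod.mk.injEq] at h
  obtain ⟨-, h1, h2⟩ := h
  have h1 : ∀ q q', r n'.x q < r n'.x q' ↔ r n.x q < r n.x q' := by
    intro q q'
    exact iff_of_eq (congrFun (congrFun h1 q) q')
  have h2 : ∀ q, n'.L.idxOf (r n'.x q) = n.L.idxOf (r n.x q) := by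
    intro q
    simpa using congrFun h2 q
  let f : O → O := fun y => if h : ∃ q, r n'.x q = y then r n.x h.choose else y
  have hf : ∀ q, f (r n'.x q) = r n.x q := by
    intro q
    have h : ∃ q', r n'.x q' = r n'.x q := ⟨q, rfl⟩
    have he : f (r n'.x q) = r n.x h.choose := dif_pos h
    rw [he]
    have hs := h.choose_spec
    apply le_antisymm
    · rw [← not_lt, ← h1, not_lt]; exact hs.le
    · rw [← not_lt, ← h1, not_lt]; exact hs.ge
  have hmem : ∀ (n : FNode X Q O r) (q : Q), r n.x q ∈ n.L := fun n q => (n.mem _).2 ⟨q, rfl⟩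
  have hlen : ∀ i, i < n'.L.length ↔ i < n.L.length := by
    intro i
    constructor
    · intro hi
      obtain ⟨q, hq⟩ := (n'.mem _).1 (List.getElem_mem hi)
      have := h2 q
      rw [hq, n'.nodup.idxOf_getElem] at this
      rw [this]
      exact List.idxOf_lt_length_of_mem (hmem n q)
    · intro hi
      obtain ⟨q, hq⟩ := (n.mem _).1 (List.getElem_mem hi)
      have := h2 q
      rw [hq, n.nodup.idxOf_getElem] at this
      rw [← this]
      exact List.idxOf_lt_length_of_mem (hmem n' q)
  refine ⟨f, hf, ?_, ?_⟩
  · intro x hx y hy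
    obtain ⟨q, rfl⟩ := (n'.mem _).1 hx
    obtain ⟨q', rfl⟩ := (n'.mem _).1 hy
    rw [hf, hf, h1]
  · have hl : n'.L.length = n.L.length := by
      have ha := hlen n'.L.length
      have hb := hlen n.L.length
      omega
    apply List.ext_getElem
    · simp [hl]
    · intro i hi hi'
      have hi2 : i < n'.L.length := by simpa using hi'
      obtain ⟨q, hq⟩ := (n'.mem _).1 (List.getElem_mem hi2)
      have h3 := h2 q
      rw [hq, n'.nodup.idxOf_getElem] at h3
      rw [List.getElem_map, ← hq, hf]
      subst h3
      exact List.getElem_idxOf _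

/-- **Folding theorem.** -/
theorem fold_exists {X D Q Λ : Type} {O : Type*} [Fintype Q] [Fintype Λ] [LinearOrder O]
    [WellFoundedLT O] (lab : X → Λ) (succ : X → D → X) (r : X → Q → O) :
    ∃ (C : Type) (_ : Finite C) (rep : C → X) (nxt : C → D → C),
      Nat.card C ≤ Fintype.card Λ * (2 ^ (Fintype.card Q * Fintype.card Q) *
        (Fintype.card Q + 1) ^ Fintype.card Q) ∧
      (∀ c d, lab (rep (nxt c d)) = lab (succ (rep c) d)) ∧
      (∀ x, ∃ c, lab (rep c) = lab x) ∧
      (∀ (c : ℕ → C) (d : ℕ → D) (q : ℕ → Q), (∀ t, c (t+1) = nxt (c t) (d t)) →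
        (∀ t, r (succ (rep (c t)) (d t)) (q (t+1)) ≤ r (rep (c t)) (q t)) →
        ¬ ∀ t, ∃ s ≥ t, r (succ (rep (c s)) (d s)) (q (s+1)) < r (rep (c s)) (q s)) := by
  let Code := Λ × (Q → Q → Prop) × (Q → Fin (Fintype.card Q + 1))
  let C := {c : Code // ∃ n : FNode X Q O r, n.code lab = c}
  have hwf : WellFounded (fun n n' : FNode X Q O r => List.Shortlex (· < ·) n.L n'.L) :=
    InvImage.wf (fun n : FNode X Q O r => n.L)
      (List.Shortlex.wf (wellFounded_lt (α := O)))
  have hrep : ∀ c : C, ∃ n : FNode X Q O r, n.code lab = c.1 ∧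
      ∀ n' : FNode X Q O r, n'.code lab = c.1 → ¬ List.Shortlex (· < ·) n'.L n.L := by
    intro c
    obtain ⟨m, hm, hmin⟩ := hwf.has_min {n | n.code lab = c.1} c.2
    exact ⟨m, hm, fun n' hn' => hmin n' hn'⟩
  choose rp hrp hmin using hrep
  refine ⟨C, inferInstance, fun c => (rp c).x, fun c d => ⟨((rp c).nx succ d).code lab, _, rfl⟩,
    ?_, ?_, ?_, ?_⟩
  · have h1 : Nat.card C ≤ Nat.card Code := Nat.card_le_card_of_injective _ Subtype.val_injective
    refine h1.trans (le_of_eq ?_)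
    rw [Nat.card_eq_fintype_card]
    simp only [Code, Fintype.card_prod, Fintype.card_fun, Fintype.card_fin, Fintype.card_prop,
      ← pow_mul]
  · intro c d
    exact congrArg Prod.fst (hrp ⟨((rp c).nx succ d).code lab, _, rfl⟩)
  · intro x
    let n : FNode X Q O r := ⟨x, (Finset.univ.image (r x)).toList, Finset.nodup_toList _, by simp⟩
    exact ⟨⟨n.code lab, n, rfl⟩, congrArg Prod.fst (hrp ⟨n.code lab, n, rfl⟩)⟩
  · intro c d q hc hle hlt
    have hcode : ∀ t, ((rp (c t)).nx succ (d t)).code lab = (rp (c (t+1))).code lab := by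
      intro t
      rw [hrp (c (t+1)), hc t]
    apply core (Fintype.card Q) (fun t => (rp (c t)).L) (fun t => ((rp (c t)).nx succ (d t)).L)
      (fun t => Finset.univ.image (r (succ (rp (c t)).x (d t))))
      (fun t => r (rp (c t)).x (q t)) (fun t => r (succ (rp (c t)).x (d t)) (q (t+1)))
    · refine ⟨?_, ?_, hle, fun t => rfl, ?_, ?_, hlt⟩
      · intro t; exact ((rp (c t)).mem _).2 ⟨_, rfl⟩
      · intro t; simp
      · intro t
        obtain ⟨f, h1, h2, h3⟩ := FNode.code_map lab _ _ (hcode t)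
        exact ⟨f, h2, h3, (h1 _).symm⟩
      · intro t
        apply hmin
        rw [hcode t, hrp]
    · intro t; exact FNode.len _

end Fold2

section Ltl
open Classical Form

lemma self_mem_subf (φ : Form) : φ ∈ φ.subf := by
  cases φ <;> simp [Form.subf]

lemma subf_trans {θ ψ χ : Form} (h1 : ψ ∈ θ.subf) (h2 : χ ∈ ψ.subf) : χ ∈ θ.subf := by
  induction θ with
  | tt | ff | prop | nprop =>
    simp only [Form.subf, Finset.mem_singleton] at h1
    subst h1; exact h2
  | or a b iha ihb | and a b iha ihb | unt a b iha ihb | rel a b iha ihb =>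
    simp only [Form.subf, Finset.mem_insert, Finset.mem_union] at h1
    rcases h1 with rfl | h1 | h1
    · exact h2
    · simp [Form.subf, iha h1]
    · simp [Form.subf, ihb h1]
  | next a iha | ex a iha | al a iha =>
    simp only [Form.subf, Finset.mem_insert] at h1
    rcases h1 with rfl | h1
    · exact h2
    · simp [Form.subf, iha h1]

/-- Local consistency of truth sets `K`, `K'` at successive positions; `h` holds the
atoms (literals and quantified formulas). -/
def Loc (h K K' : Finset Form) : Form → Prop
  | .tt => .tt ∈ K
  | .ff => .ff ∉ K
  | .prop p => .prop p ∈ K ↔ .prop p ∈ h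
  | .nprop p => .nprop p ∈ K ↔ .nprop p ∈ h
  | .or a b => .or a b ∈ K ↔ a ∈ K ∨ b ∈ K
  | .and a b => .and a b ∈ K ↔ a ∈ K ∧ b ∈ K
  | .next a => .next a ∈ K ↔ a ∈ K'
  | .unt a b => .unt a b ∈ K ↔ b ∈ K ∨ (a ∈ K ∧ .unt a b ∈ K')
  | .rel a b => .rel a b ∈ K ↔ b ∈ K ∧ (a ∈ K ∨ .rel a b ∈ K')
  | .ex a => .ex a ∈ K ↔ .ex a ∈ h
  | .al a => .al a ∈ K ↔ .al a ∈ h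

/-- Pending eventualities. -/
def pend (K : Finset Form) : Form → Prop
  | .unt a b => .unt a b ∈ K ∧ b ∉ K
  | .rel a b => .rel a b ∉ K ∧ b ∈ K
  | _ => False

/-- Linear-time satisfaction on a stream of atom sets. -/
def SatL (h : ℕ → Finset Form) : ℕ → Form → Prop
  | _, .tt => True
  | _, .ff => False
  | t, .prop p => .prop p ∈ h t
  | t, .nprop p => .nprop p ∈ h t
  | t, .or a b => SatL h t a ∨ SatL h t b
  | t, .and a b => SatL h t a ∧ SatL h t b
  | t, .next a => SatL h (t+1) a
  | t, .unt a b => ∃ k, SatL h (t+k) b ∧ ∀ j < k, SatL h (t+j) a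
  | t, .rel a b => ∀ k, SatL h (t+k) b ∨ ∃ j < k, SatL h (t+j) a
  | t, .ex a => .ex a ∈ h t
  | t, .al a => .al a ∈ h t

lemma satL_unt_step (h : ℕ → Finset Form) (t : ℕ) (a b : Form) :
    SatL h t (.unt a b) ↔ SatL h t b ∨ (SatL h t a ∧ SatL h (t+1) (.unt a b)) := by
  simp only [SatL]
  constructor
  · rintro ⟨k, hk, hj⟩
    rcases k with _ | k
    · exact Or.inl hk
    · right
      refine ⟨hj 0 (by omega), k, ?_, fun j hjk => ?_⟩
      · rw [show t + 1 + k = t + (k+1) by omega]; exact hk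
      · rw [show t + 1 + j = t + (j+1) by omega]; exact hj _ (by omega)
  · rintro (h1 | ⟨h1, k, hk, hj⟩)
    · exact ⟨0, h1, fun j hj => by omega⟩
    · refine ⟨k+1, ?_, fun j hjk => ?_⟩
      · rw [show t + (k+1) = t + 1 + k by omega]; exact hk
      · rcases j with _ | j
        · exact h1
        · rw [show t + (j+1) = t + 1 + j by omega]; exact hj _ (by omega)

lemma satL_rel_step (h : ℕ → Finset Form) (t : ℕ) (a b : Form) :
    SatL h t (.rel a b) ↔ SatL h t b ∧ (SatL h t a ∨ SatL h (t+1) (.rel a b)) := by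
  simp only [SatL]
  constructor
  · intro H
    refine ⟨(H 0).resolve_right (by rintro ⟨j, hj, -⟩; omega), ?_⟩
    by_cases ha : SatL h t a
    · exact Or.inl ha
    · right
      intro k
      rcases H (k+1) with h1 | ⟨j, hj, h1⟩
      · left; rw [show t + 1 + k = t + (k+1) by omega]; exact h1
      · right
        rcases j with _ | j
        · exact absurd h1 ha
        · exact ⟨j, by omega, by rw [show t + 1 + j = t + (j+1) by omega]; exact h1⟩
  · rintro ⟨hb, H⟩ k
    rcases k with _ | k
    · exact Or.inl hb
    · rcases H with ha | H
      · exact Or.inr ⟨0, by omega, ha⟩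
      · rcases H k with h1 | ⟨j, hj, h1⟩
        · left; rw [show t + (k+1) = t + 1 + k by omega]; exact h1
        · right
          exact ⟨j+1, by omega, by rw [show t + (j+1) = t + 1 + j by omega]; exact h1⟩

/-- Truth set of a stream. -/
noncomputable def TL (θ : Form) (h : ℕ → Finset Form) (t : ℕ) : Finset Form :=
  θ.subf.filter (SatL h t)

lemma mem_sub2 {θ a b : Form} (f : Form → Form → Form)
    (hf : (f a b).subf = insert (f a b) (a.subf ∪ b.subf)) (h : f a b ∈ θ.subf) :
    a ∈ θ.subf ∧ b ∈ θ.subf := by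
  constructor
  · apply subf_trans h; rw [hf]; simp [self_mem_subf]
  · apply subf_trans h; rw [hf]; simp [self_mem_subf]

lemma mem_sub1 {θ a : Form} (f : Form → Form)
    (hf : (f a).subf = insert (f a) a.subf) (h : f a ∈ θ.subf) : a ∈ θ.subf := by
  apply subf_trans h; rw [hf]; simp [self_mem_subf]

lemma TL_loc (θ : Form) (h : ℕ → Finset Form) (t : ℕ) :
    ∀ ψ ∈ θ.subf, Loc (h t) (TL θ h t) (TL θ h (t+1)) ψ := by
  intro ψ hψ
  cases ψ with
  | tt => simp [Loc, TL, hψ, SatL]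
  | ff => simp [Loc, TL, SatL]
  | prop p => simp [Loc, TL, hψ, SatL]
  | nprop p => simp [Loc, TL, hψ, SatL]
  | or a b =>
    obtain ⟨ha, hb⟩ := mem_sub2 Form.or rfl hψ
    simp [Loc, TL, hψ, SatL, ha, hb]
  | and a b =>
    obtain ⟨ha, hb⟩ := mem_sub2 Form.and rfl hψ
    simp [Loc, TL, hψ, SatL, ha, hb]
  | next a =>
    have ha := mem_sub1 Form.next rfl hψ
    simp [Loc, TL, hψ, SatL, ha]
  | unt a b =>
    obtain ⟨ha, hb⟩ := mem_sub2 Form.unt rfl hψ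
    simp only [Loc, TL, hψ, ha, hb, Finset.mem_filter, true_and]
    exact satL_unt_step h t a b
  | rel a b =>
    obtain ⟨ha, hb⟩ := mem_sub2 Form.rel rfl hψ
    simp only [Loc, TL, hψ, ha, hb, Finset.mem_filter, true_and]
    exact satL_rel_step h t a b
  | ex a => simp [Loc, TL, hψ, SatL]
  | al a => simp [Loc, TL, hψ, SatL]

lemma TL_fair (θ : Form) (h : ℕ → Finset Form) (t : ℕ) :
    ∀ e ∈ θ.subf, ∃ s ≥ t, ¬ pend (TL θ h s) e := by
  intro e he
  by_contra hc
  push Not at hc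
  cases e with
  | unt a b =>
    obtain ⟨ha, hb⟩ := mem_sub2 Form.unt rfl he
    have h1 := (hc t le_rfl).1
    simp only [TL, Finset.mem_filter, SatL] at h1
    obtain ⟨-, k, hk, -⟩ := h1
    apply (hc (t+k) (by omega)).2
    simp [TL, hb, hk]
  | rel a b =>
    obtain ⟨ha, hb⟩ := mem_sub2 Form.rel rfl he
    have h1 := (hc t le_rfl).1
    apply h1
    simp only [TL, Finset.mem_filter, SatL]
    refine ⟨he, fun k => Or.inl ?_⟩
    have := (hc (t+k) (by omega)).2
    simp only [TL, Finset.mem_filter] at this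
    exact this.2
  | _ => exact hc t le_rfl

/-- A locally consistent fair stream of truth sets is the actual one. -/
lemma TL_unique (θ : Form) (h K : ℕ → Finset Form)
    (hloc : ∀ t, ∀ ψ ∈ θ.subf, Loc (h t) (K t) (K (t+1)) ψ)
    (hfair : ∀ t, ∀ e ∈ θ.subf, ∃ s ≥ t, ¬ pend (K s) e) :
    ∀ ψ, ψ ∈ θ.subf → ∀ t, ψ ∈ K t ↔ SatL h t ψ := by
  intro ψ
  induction ψ with
  | tt => intro hψ t; have := hloc t _ hψ; simp only [Loc] at this; simp [SatL, this]
  | ff => intro hψ t; have := hloc t _ hψ; simp only [Loc] at this; simp [SatL, this]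
  | prop p | nprop p | ex a _ | al a _ =>
    intro hψ t; have := hloc t _ hψ; simp only [Loc] at this; simp [SatL, this]
  | or a b iha ihb =>
    intro hψ t
    obtain ⟨ha, hb⟩ := mem_sub2 Form.or rfl hψ
    have := hloc t _ hψ
    simp only [Loc] at this
    rw [this, iha ha, ihb hb]; simp [SatL]
  | and a b iha ihb =>
    intro hψ t
    obtain ⟨ha, hb⟩ := mem_sub2 Form.and rfl hψ
    have := hloc t _ hψ
    simp only [Loc] at this
    rw [this, iha ha, ihb hb]; simp [SatL]
  | next a iha =>
    intro hψ t
    have ha := mem_sub1 Form.next rfl hψ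
    have := hloc t _ hψ
    simp only [Loc] at this
    rw [this, iha ha]; simp [SatL]
  | unt a b iha ihb =>
    intro hψ t
    obtain ⟨ha, hb⟩ := mem_sub2 Form.unt rfl hψ
    have hl : ∀ t, (Form.unt a b ∈ K t ↔ SatL h t b ∨ (SatL h t a ∧ Form.unt a b ∈ K (t+1))) := by
      intro t
      have := hloc t _ hψ
      simp only [Loc] at this
      rw [this, iha ha, ihb hb]
    constructor
    · intro hm
      by_contra hn
      have hinv : ∀ k, Form.unt a b ∈ K (t+k) ∧ ¬ SatL h (t+k) (.unt a b) := by
        intro k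
        induction k with
        | zero => exact ⟨hm, hn⟩
        | succ k ih =>
          obtain ⟨i1, i2⟩ := ih
          rw [hl] at i1
          rw [satL_unt_step] at i2
          push Not at i2
          have := i1.resolve_left i2.1
          exact ⟨this.2, i2.2 this.1⟩
      obtain ⟨s, hs, hp⟩ := hfair t _ hψ
      obtain ⟨k, rfl⟩ := Nat.exists_eq_add_of_le hs
      obtain ⟨i1, i2⟩ := hinv k
      apply hp
      refine ⟨i1, fun hbK => i2 ?_⟩
      rw [satL_unt_step]
      exact Or.inl ((ihb hb _).1 hbK)
    · intro hs
      simp only [SatL] at hs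
      obtain ⟨k, hk, hj⟩ := hs
      induction k generalizing t with
      | zero => rw [hl]; exact Or.inl hk
      | succ k ih =>
        rw [hl]
        right
        refine ⟨hj 0 (by omega), ih (t+1) ?_ ?_⟩
        · rw [show t + 1 + k = t + (k+1) by omega]; exact hk
        · intro j hjk
          rw [show t + 1 + j = t + (j+1) by omega]; exact hj _ (by omega)
  | rel a b iha ihb =>
    intro hψ t
    obtain ⟨ha, hb⟩ := mem_sub2 Form.rel rfl hψ
    have hl : ∀ t, (Form.rel a b ∈ K t ↔ SatL h t b ∧ (SatL h t a ∨ Form.rel a b ∈ K (t+1))) := by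
      intro t
      have := hloc t _ hψ
      simp only [Loc] at this
      rw [this, iha ha, ihb hb]
    constructor
    · intro hm
      by_contra hn
      simp only [SatL] at hn
      push Not at hn
      obtain ⟨k, hk, hj⟩ := hn
      induction k generalizing t with
      | zero => exact hk ((hl t).1 hm).1
      | succ k ih =>
        have h2 := ((hl t).1 hm).2.resolve_left (hj 0 (by omega))
        apply ih (t+1) h2
        · rw [show t + 1 + k = t + (k+1) by omega]; exact hk
        · intro j hjk
          rw [show t + 1 + j = t + (j+1) by omega]; exact hj _ (by omega)
    · intro hs
      by_contra hn
      have hinv : ∀ k, Form.rel a b ∉ K (t+k) ∧ SatL h (t+k) (.rel a b) := by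
        intro k
        induction k with
        | zero => exact ⟨hn, hs⟩
        | succ k ih =>
          obtain ⟨i1, i2⟩ := ih
          rw [hl] at i1
          rw [satL_rel_step] at i2
          push Not at i1
          have := i1 i2.1
          exact ⟨this.2, i2.2.resolve_left this.1⟩
      obtain ⟨s, hs', hp⟩ := hfair t _ hψ
      obtain ⟨k, rfl⟩ := Nat.exists_eq_add_of_le hs'
      obtain ⟨i1, i2⟩ := hinv k
      apply hp
      refine ⟨i1, ?_⟩
      rw [satL_rel_step] at i2
      exact (ihb hb _).2 i2.1

lemma Loc_det (θ : Form) (h K1 K2 K' : Finset Form)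
    (h1 : ∀ ψ ∈ θ.subf, Loc h K1 K' ψ) (h2 : ∀ ψ ∈ θ.subf, Loc h K2 K' ψ) :
    ∀ ψ, ψ ∈ θ.subf → (ψ ∈ K1 ↔ ψ ∈ K2) := by
  intro ψ
  induction ψ with
  | tt | ff | prop p | nprop p | ex a _ | al a _ =>
    intro hψ
    have a1 := h1 _ hψ
    have a2 := h2 _ hψ
    simp only [Loc] at a1 a2
    simp [a1, a2]
  | or a b iha ihb =>
    intro hψ
    obtain ⟨ha, hb⟩ := mem_sub2 Form.or rfl hψ
    have a1 := h1 _ hψ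
    have a2 := h2 _ hψ
    simp only [Loc] at a1 a2
    rw [a1, a2, iha ha, ihb hb]
  | and a b iha ihb =>
    intro hψ
    obtain ⟨ha, hb⟩ := mem_sub2 Form.and rfl hψ
    have a1 := h1 _ hψ
    have a2 := h2 _ hψ
    simp only [Loc] at a1 a2
    rw [a1, a2, iha ha, ihb hb]
  | unt a b iha ihb =>
    intro hψ
    obtain ⟨ha, hb⟩ := mem_sub2 Form.unt rfl hψ
    have a1 := h1 _ hψ
    have a2 := h2 _ hψ
    simp only [Loc] at a1 a2
    rw [a1, a2, iha ha, ihb hb]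
  | rel a b iha ihb =>
    intro hψ
    obtain ⟨ha, hb⟩ := mem_sub2 Form.rel rfl hψ
    have a1 := h1 _ hψ
    have a2 := h2 _ hψ
    simp only [Loc] at a1 a2
    rw [a1, a2, iha ha, ihb hb]
  | next a iha =>
    intro hψ
    have a1 := h1 _ hψ
    have a2 := h2 _ hψ
    simp only [Loc] at a1 a2
    rw [a1, a2]

end Ltl

section Model
open Classical Form

variable {S : Type} {T : TS S}

lemma suffix_suffix (π : T.Path) (t k : ℕ) : (π.suffix t).suffix k = π.suffix (t+k) := by
  simp only [TS.Path.suffix, TS.Path.mk.injEq]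
  funext i
  rw [Nat.add_assoc]

lemma suffix_zero (π : T.Path) : π.suffix 0 = π := by
  cases π
  simp [TS.Path.suffix]

/-- Truth set of a path. -/
noncomputable def HH (θ : Form) (π : T.Path) : Finset Form := θ.subf.filter (Sat T π)

lemma HH_sub (θ : Form) (π : T.Path) : HH θ π ⊆ θ.subf := Finset.filter_subset _ _

lemma sat_satL (θ : Form) (π : T.Path) : ∀ ψ, ψ ∈ θ.subf → ∀ t,
    (Sat T (π.suffix t) ψ ↔ SatL (fun s => HH θ (π.suffix s)) t ψ) := by
  intro ψ
  induction ψ with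
  | tt | ff => intro hψ t; simp [Sat, SatL]
  | prop p | nprop p | ex a _ | al a _ => intro hψ t; simp [SatL, HH, hψ]
  | or a b iha ihb =>
    intro hψ t
    obtain ⟨ha, hb⟩ := mem_sub2 Form.or rfl hψ
    simp [Sat, SatL, iha ha, ihb hb]
  | and a b iha ihb =>
    intro hψ t
    obtain ⟨ha, hb⟩ := mem_sub2 Form.and rfl hψ
    simp [Sat, SatL, iha ha, ihb hb]
  | next a iha =>
    intro hψ t
    have ha := mem_sub1 Form.next rfl hψ
    simp [Sat, SatL, suffix_suffix, iha ha]
  | unt a b iha ihb =>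
    intro hψ t
    obtain ⟨ha, hb⟩ := mem_sub2 Form.unt rfl hψ
    simp [Sat, SatL, suffix_suffix, iha ha, ihb hb]
  | rel a b iha ihb =>
    intro hψ t
    obtain ⟨ha, hb⟩ := mem_sub2 Form.rel rfl hψ
    simp [Sat, SatL, suffix_suffix, iha ha, ihb hb]

lemma HH_TL (θ : Form) (π : T.Path) (t : ℕ) :
    HH θ (π.suffix t) = TL θ (fun s => HH θ (π.suffix s)) t := by
  ext ψ
  constructor
  · intro h
    obtain ⟨h1, h2⟩ := Finset.mem_filter.1 h
    exact Finset.mem_filter.2 ⟨h1, (sat_satL θ π ψ h1 t).1 h2⟩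
  · intro h
    obtain ⟨h1, h2⟩ := Finset.mem_filter.1 h
    exact Finset.mem_filter.2 ⟨h1, (sat_satL θ π ψ h1 t).2 h2⟩

lemma HH_loc (θ : Form) (π : T.Path) :
    ∀ ψ ∈ θ.subf, Loc (HH θ π) (HH θ π) (HH θ (π.suffix 1)) ψ := by
  have := TL_loc θ (fun s => HH θ (π.suffix s)) 0
  rw [← HH_TL, ← HH_TL] at this
  simpa only [suffix_zero] using this

lemma HH_fair (θ : Form) (π : T.Path) (e : Form) (he : e ∈ θ.subf) :
    ∃ k, ¬ pend (HH θ (π.suffix k)) e := by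
  obtain ⟨s, -, h⟩ := TL_fair θ (fun s => HH θ (π.suffix s)) 0 e he
  rw [← HH_TL] at h
  exact ⟨s, h⟩

lemma Loc_congr (θ : Form) (π π' : T.Path) (h0 : π.seq 0 = π'.seq 0) (K K' : Finset Form)
    (ψ : Form) (h : Loc (HH θ π) K K' ψ) : Loc (HH θ π') K K' ψ := by
  cases ψ <;> simp only [Loc, HH, Finset.mem_filter, Sat, h0] at h ⊢ <;> exact h

/-- Prepend a state to a path. -/
def consPath (v : S) (π : T.Path) (h : T.step v (π.seq 0)) : T.Path where
  seq i := Nat.casesOn i v (fun j => π.seq j)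
  valid i := by cases i with
    | zero => exact h
    | succ i => exact π.valid i

lemma consPath_suffix (v : S) (π : T.Path) (h : T.step v (π.seq 0)) :
    (consPath v π h).suffix 1 = π := by
  cases π with
  | mk seq valid =>
    simp only [TS.Path.suffix, consPath, TS.Path.mk.injEq]
    funext i
    rw [Nat.add_comm]

/-- `K` is the truth set of some path from `v`. -/
def Rlz (θ : Form) (T : TS S) (v : S) (K : Finset Form) : Prop :=
  ∃ π : T.Path, π.seq 0 = v ∧ HH θ π = K

lemma Rlz_prepend (θ : Form) (π : T.Path) (w : S) (hw : T.step (π.seq 0) w)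
    (K K' : Finset Form) (hK : K ⊆ θ.subf)
    (hl : ∀ ψ ∈ θ.subf, Loc (HH θ π) K K' ψ) (hr : Rlz θ T w K') : Rlz θ T (π.seq 0) K := by
  obtain ⟨π', rfl, rfl⟩ := hr
  refine ⟨consPath _ π' hw, rfl, ?_⟩
  have h1 := HH_loc θ (consPath _ π' hw)
  rw [consPath_suffix] at h1
  have h2 : ∀ ψ ∈ θ.subf, Loc (HH θ (consPath _ π' hw)) K (HH θ π') ψ :=
    fun ψ hψ => Loc_congr θ π (consPath _ π' hw) rfl _ _ _ (hl ψ hψ)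
  have h3 := Loc_det θ _ _ _ _ h1 h2
  ext ψ
  constructor
  · intro h; exact (h3 ψ (HH_sub θ _ h)).1 h
  · intro h; exact (h3 ψ (hK h)).2 h

/-- Eventualities that are not pending. -/
noncomputable def NP (θ : Form) (K : Finset Form) : Finset Form :=
  θ.subf.filter (fun e => ¬ pend K e)

/-- Update of the round record. -/
noncomputable def updW (θ : Form) (K W : Finset Form) : Finset Form :=
  if θ.subf ⊆ W ∪ NP θ K then ∅ else W ∪ NP θ K

lemma updW_sub (θ : Form) (K W : Finset Form) (h : W ⊆ θ.subf) : updW θ K W ⊆ θ.subf := by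
  unfold updW
  split_ifs
  · simp
  · exact Finset.union_subset h (Finset.filter_subset _ _)

lemma W_fair1 (θ : Form) (K W : ℕ → Finset Form) (hW : ∀ t, W (t+1) = updW θ (K t) (W t))
    (hf : ∀ t, ∀ e ∈ θ.subf, ∃ s ≥ t, ¬ pend (K s) e) :
    ∀ t, ∃ s ≥ t, θ.subf ⊆ W s ∪ NP θ (K s) := by
  intro t
  by_contra hc
  push Not at hc
  have hstep : ∀ s ≥ t, W (s+1) = W s ∪ NP θ (K s) := by
    intro s hs
    rw [hW, updW, if_neg (hc s hs)]
  have hev : ∀ e ∈ θ.subf, ∀ᶠ s in Filter.atTop, e ∈ W s := by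
    intro e he
    obtain ⟨s, hs, hp⟩ := hf t e he
    rw [Filter.eventually_atTop]
    refine ⟨s+1, fun u hu => ?_⟩
    induction u, hu using Nat.le_induction with
    | base => rw [hstep s hs]; simp [NP, he, hp]
    | succ u hu ih => rw [hstep u (by omega)]; simp [ih]
  have := (Filter.eventually_all_finset θ.subf).2 hev
  obtain ⟨s, hs1, hs2⟩ := (this.and (Filter.eventually_ge_atTop t)).exists
  exact hc s hs2 (fun e he => Finset.mem_union_left _ (hs1 e he))

lemma W_fair2 (θ : Form) (K W : ℕ → Finset Form) (hW : ∀ t, W (t+1) = updW θ (K t) (W t))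
    (hfull : ∀ t, ∃ s ≥ t, θ.subf ⊆ W s ∪ NP θ (K s)) :
    ∀ t, ∀ e ∈ θ.subf, ∃ s ≥ t, ¬ pend (K s) e := by
  intro t e he
  by_contra hc
  push Not at hc
  obtain ⟨s1, hs1, h1⟩ := hfull t
  have hn : ∀ s ≥ s1 + 1, e ∉ W s := by
    intro s hs
    induction s, hs using Nat.le_induction with
    | base => rw [hW, updW, if_pos h1]; simp
    | succ s hs ih =>
      rw [hW, updW]
      split_ifs
      · simp
      · simp [ih, NP, hc s (by omega)]
  obtain ⟨s2, hs2, h2⟩ := hfull (s1+1)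
  have := h2 he
  simp [hn s2 hs2, NP, hc s2 (by omega)] at this

/-- Ranks for the universal threads. -/
lemma rank_univ (θ : Form) (T : TS S) :
    ∃ r : T.Path × Finset Form × Finset Form → Ordinal.{0},
      ∀ (π π' : T.Path) (K K' W : Finset Form), T.step (π.seq 0) (π'.seq 0) → K ⊆ θ.subf →
        (∀ ψ ∈ θ.subf, Loc (HH θ π) K K' ψ) → ¬ Rlz θ T (π.seq 0) K →
        r (π', K', updW θ K W) ≤ r (π, K, W) ∧
        (θ.subf ⊆ W ∪ NP θ K → r (π', K', updW θ K W) < r (π, K, W)) := by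
  let E : T.Path × Finset Form × Finset Form → T.Path × Finset Form × Finset Form → Prop :=
    fun x y => T.step (x.1.seq 0) (y.1.seq 0) ∧ x.2.1 ⊆ θ.subf ∧
      (∀ ψ ∈ θ.subf, Loc (HH θ x.1) x.2.1 y.2.1 ψ) ∧ ¬ Rlz θ T (x.1.seq 0) x.2.1 ∧
      y.2.2 = updW θ x.2.1 x.2.2
  obtain ⟨r, h1, h2⟩ := rank_exists E (fun x y => E x y ∧ θ.subf ⊆ x.2.2 ∪ NP θ x.2.1)
    (fun _ _ h => h.1) (by
      intro y hE hS
      let σ : T.Path := ⟨fun t => (y t).1.seq 0, fun t => (hE t).1⟩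
      have hloc : ∀ t, ∀ ψ ∈ θ.subf,
          Loc (HH θ (σ.suffix t)) ((y t).2.1) ((y (t+1)).2.1) ψ := by
        intro t ψ hψ
        exact Loc_congr θ (y t).1 (σ.suffix t) rfl _ _ _ ((hE t).2.2.1 ψ hψ)
      have hfair := W_fair2 θ (fun t => (y t).2.1) (fun t => (y t).2.2)
        (fun t => (hE t).2.2.2.2) (fun t => by
          obtain ⟨s, hs, h⟩ := hS t
          exact ⟨s, hs, h.2⟩)
      have hu := TL_unique θ (fun t => HH θ (σ.suffix t)) (fun t => (y t).2.1) hloc hfair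
      apply (hE 0).2.2.2.1
      refine ⟨σ, rfl, ?_⟩
      rw [← suffix_zero σ, HH_TL]
      ext ψ
      simp only [TL, Finset.mem_filter]
      constructor
      · rintro ⟨h1, h2⟩; exact (hu ψ h1 0).2 h2
      · intro h
        have := (hE 0).2.1 h
        exact ⟨this, (hu ψ this 0).1 h⟩)
  refine ⟨r, fun π π' K K' W a b c d => ?_⟩
  have hEE : E (π, K, W) (π', K', updW θ K W) := ⟨a, b, c, d, rfl⟩
  exact ⟨h1 _ _ hEE, fun hf => h2 _ _ ⟨hEE, hf⟩⟩

/-- Steps until the eventuality `e` is not pending. -/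
noncomputable def dist (θ : Form) (e : Form) (π : T.Path) : ℕ :=
  sInf {k | ¬ pend (HH θ (π.suffix k)) e}

lemma dist_lt (θ : Form) (e : Form) (he : e ∈ θ.subf) (π : T.Path) (hp : pend (HH θ π) e) :
    dist θ e (π.suffix 1) < dist θ e π := by
  have h1 : ¬ pend (HH θ (π.suffix (dist θ e π))) e :=
    Nat.sInf_mem (s := {k | ¬ pend (HH θ (π.suffix k)) e}) (HH_fair θ π e he)
  rcases hd : dist θ e π with _ | k
  · rw [hd, suffix_zero] at h1
    exact absurd hp h1
  · rw [hd] at h1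
    apply Nat.lt_succ_of_le
    apply Nat.sInf_le
    simp only [Set.mem_ofPred_eq]
    rw [suffix_suffix, Nat.add_comm]
    exact h1

/-- A witness path for the truth set `K`. -/
noncomputable def wit (θ : Form) (π : T.Path) (K : Finset Form) : T.Path :=
  if HH θ π = K then π else if h : Rlz θ T (π.seq 0) K then h.choose else π

lemma wit_zero (θ : Form) (π : T.Path) (K : Finset Form) : (wit θ π K).seq 0 = π.seq 0 := by
  unfold wit
  split_ifs with h1 h2
  · rfl
  · exact h2.choose_spec.1
  · rfl

lemma wit_HH (θ : Form) (π : T.Path) (K : Finset Form) (h : Rlz θ T (π.seq 0) K) :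
    HH θ (wit θ π K) = K := by
  unfold wit
  split_ifs with h1
  · exact h1
  · exact h.choose_spec.2

lemma wit_self (θ : Form) (π : T.Path) : wit θ π (HH θ π) = π := by
  unfold wit
  rw [if_pos rfl]

lemma wit_step (θ : Form) (π : T.Path) (K : Finset Form) :
    T.step (π.seq 0) (((wit θ π K).suffix 1).seq 0) := by
  rw [← wit_zero θ π K]
  exact (wit θ π K).valid 0

/-- The folded structure. -/
theorem folded (θ : Form) (T : TS S) :
    ∃ (C : Type) (_ : Finite C) (rep : C → T.Path) (nxt : C → θ.subf.powerset → C),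
      Nat.card C ≤ 2 ^ 2 ^ (8 * θ.subf.card) ∧
      (∀ c d, HH θ (rep (nxt c d)) = HH θ ((wit θ (rep c) d).suffix 1)) ∧
      (∀ c d K, K ⊆ θ.subf → (Rlz θ T ((rep (nxt c d)).seq 0) K ↔
        Rlz θ T (((wit θ (rep c) d).suffix 1).seq 0) K)) ∧
      (∀ π : T.Path, ∃ c, HH θ (rep c) = HH θ π) ∧
      (∀ (c : ℕ → C) (d : ℕ → θ.subf.powerset), (∀ t, c (t+1) = nxt (c t) (d t)) →
        ∀ (K : ℕ → Finset Form), (∀ t, K t ⊆ θ.subf) →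
          (∀ t, ∀ ψ ∈ θ.subf, Loc (HH θ (rep (c t))) (K t) (K (t+1)) ψ) →
          (∀ t, ¬ Rlz θ T ((rep (c t)).seq 0) (K t)) →
          ¬ ∀ t, ∀ e ∈ θ.subf, ∃ s ≥ t, ¬ pend (K s) e) ∧
      (∀ (c : ℕ → C) (d : ℕ → θ.subf.powerset), (∀ t, c (t+1) = nxt (c t) (d t)) →
        (∀ t, (d t : Finset Form) = HH θ (rep (c t))) →
        ∀ e ∈ θ.subf, ∃ s, ¬ pend (HH θ (rep (c s))) e) := by
  obtain ⟨rA, hrA⟩ := rank_univ θ T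
  let KK := θ.subf.powerset
  let Q := (KK × KK) ⊕ θ.subf
  let r : T.Path → Q → Ordinal.{0} := fun π q => match q with
    | .inl (K, W) => rA (π, K, W)
    | .inr e => (dist θ e π : Ordinal)
  let lab : T.Path → KK × (KK → Prop) := fun π =>
    (⟨HH θ π, Finset.mem_powerset.2 (HH_sub θ π)⟩, fun K => Rlz θ T (π.seq 0) K)
  obtain ⟨C, hC, rep, nxt, hcard, hlab, hinit, hthr⟩ :=
    fold_exists lab (fun (π : T.Path) (d : KK) => (wit θ π d).suffix 1) r
  refine ⟨C, hC, rep, nxt, ?_, ?_, ?_, ?_, ?_, ?_⟩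
  · refine hcard.trans ?_
    have hn : 1 ≤ θ.subf.card := Finset.card_pos.2 ⟨θ, self_mem_subf θ⟩
    have hKK : Fintype.card KK = 2 ^ θ.subf.card := by simp [KK]
    have hQ : Fintype.card Q = 2 ^ θ.subf.card * 2 ^ θ.subf.card + θ.subf.card := by
      simp [Q, KK]
    have hΛ : Fintype.card (KK × (KK → Prop)) = 2 ^ θ.subf.card * 2 ^ 2 ^ θ.subf.card := by
      simp [KK]
    rw [hΛ, hQ]
    generalize θ.subf.card = n at *
    obtain ⟨k, hk⟩ : ∃ k, k = 2 ^ n := ⟨_, rfl⟩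
    have hnk : n ≤ k := hk ▸ (Nat.lt_two_pow_self).le
    have hk2 : 2 ≤ k := by
      rw [hk]; calc 2 = 2 ^ 1 := rfl
        _ ≤ 2 ^ n := Nat.pow_le_pow_right (by norm_num) hn
    have hk8 : 2 ^ (8 * n) = k ^ 8 := by rw [hk, ← pow_mul, Nat.mul_comm]
    rw [hk8]
    obtain ⟨m, hm⟩ : ∃ m, m = k * k + n := ⟨_, rfl⟩
    have e1 : 2 ^ n * 2 ^ 2 ^ n = 2 ^ (n + k) := by rw [pow_add, ← hk]
    rw [e1, ← hk, ← hm]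
    have hm1 : (m + 1) ^ m ≤ 2 ^ (m * m) := by
      rw [pow_mul]
      exact Nat.pow_le_pow_left Nat.lt_two_pow_self m
    have hmk : m ≤ k ^ 3 := by
      rw [hm]
      nlinarith
    have hmm : m * m ≤ k ^ 6 := by
      calc m * m ≤ k ^ 3 * k ^ 3 := Nat.mul_le_mul hmk hmk
        _ = k ^ 6 := by ring
    calc 2 ^ (n + k) * (2 ^ (m * m) * (m + 1) ^ m)
        ≤ 2 ^ (n + k) * (2 ^ (m * m) * 2 ^ (m * m)) := by gcongr
      _ = 2 ^ (n + k + (m * m + m * m)) := by rw [← pow_add, ← pow_add]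
      _ ≤ 2 ^ k ^ 8 := by
        apply Nat.pow_le_pow_right (by norm_num)
        have h6 : k ≤ k ^ 6 := Nat.le_self_pow (by norm_num) k
        have h8 : 4 * k ^ 6 ≤ k ^ 8 := by
          calc 4 * k ^ 6 ≤ (k * k) * k ^ 6 := Nat.mul_le_mul_right _ (by nlinarith)
            _ = k ^ 8 := by ring
        omega
  · intro c d
    have := congrArg Prod.fst (hlab c d)
    simpa [lab] using this
  · intro c d K hK
    have := congrFun (congrArg Prod.snd (hlab c d)) ⟨K, Finset.mem_powerset.2 hK⟩
    exact iff_of_eq this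
  · intro π
    obtain ⟨c, hc⟩ := hinit π
    refine ⟨c, ?_⟩
    have := congrArg Prod.fst hc
    simpa [lab] using this
  · intro c d hc K hK hloc hreal hfair
    let W : ℕ → Finset Form := fun t => Nat.rec ∅ (fun s w => updW θ (K s) w) t
    have hW : ∀ t, W (t+1) = updW θ (K t) (W t) := fun t => rfl
    have hWs : ∀ t, W t ⊆ θ.subf := by
      intro t
      induction t with
      | zero => simp [W]
      | succ t ih => rw [hW]; exact updW_sub _ _ _ ih
    have key := fun t => hrA (rep (c t)) ((wit θ (rep (c t)) (d t)).suffix 1) (K t) (K (t+1)) (W t)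
      (wit_step θ _ _) (hK t) (hloc t) (hreal t)
    apply hthr c d (fun t => .inl (⟨K t, Finset.mem_powerset.2 (hK t)⟩,
      ⟨W t, Finset.mem_powerset.2 (hWs t)⟩)) hc
    · intro t
      exact (key t).1
    · intro t
      obtain ⟨s, hs, h⟩ := W_fair1 θ K W hW hfair t
      exact ⟨s, hs, (key s).2 h⟩
  · intro c d hc hd e he
    by_contra hp
    push Not at hp
    have key : ∀ t, r ((wit θ (rep (c t)) (d t)).suffix 1) (.inr ⟨e, he⟩) <
        r (rep (c t)) (.inr ⟨e, he⟩) := by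
      intro t
      simp only [r]
      rw [hd t, wit_self]
      exact_mod_cast dist_lt θ e he _ (hp t)
    exact hthr c d (fun _ => .inr ⟨e, he⟩) hc (fun t => (key t).le)
      (fun t => ⟨t, le_rfl, key t⟩)

theorem small_model (θ : Form) (T : TS S) (π0 : T.Path) (hsat : Sat T π0 θ) :
    ∃ (S' : Type), Finite S' ∧ ∃ (T' : TS S') (π : T'.Path),
        π.seq 0 = T'.init ∧ Sat T' π θ ∧
        Nat.card S' ≤ 2 ^ 2 ^ (8 * θ.subf.card) ∧
        ∀ s : S', {t : S' | T'.step s t}.ncard ≤ 2 ^ θ.subf.card := by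
  obtain ⟨C, hC, rep, nxt, hcard, hlabH, hlabR, hinit, hA, hE⟩ := folded θ T
  obtain ⟨c0, hc0⟩ := hinit π0
  let T' : TS C :=
    { init := c0
      step := fun c c' => ∃ d, c' = nxt c d
      total := fun c => ⟨nxt c ⟨∅, by simp⟩, _, rfl⟩
      label := fun c => T.label ((rep c).seq 0) }
  let hs : T'.Path → ℕ → Finset Form := fun σ t => HH θ (rep (σ.seq t))
  -- every path of the new model has a truth set realized in the old one
  have claim1 : ∀ σ : T'.Path, Rlz θ T ((rep (σ.seq 0)).seq 0) (TL θ (hs σ) 0) := by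
    intro σ
    by_contra hn
    have hv : ∀ t, ∃ d, σ.seq (t+1) = nxt (σ.seq t) d := σ.valid
    choose d hd using hv
    have hsub : ∀ t, TL θ (hs σ) t ⊆ θ.subf := fun t => Finset.filter_subset _ _
    have hloc := TL_loc θ (hs σ)
    refine hA σ.seq d hd (TL θ (hs σ)) hsub hloc ?_ (TL_fair θ (hs σ))
    intro t
    induction t with
    | zero => exact hn
    | succ t ih =>
      rw [hd t, hlabR _ _ _ (hsub _)]
      intro hr
      exact ih (Rlz_prepend θ _ _ (wit_step θ _ _) _ _ (hsub t) (hloc t) hr)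
  -- conversely, every realized truth set is the one of a path of the new model
  have claim2 : ∀ c K, Rlz θ T ((rep c).seq 0) K →
      ∃ σ : T'.Path, σ.seq 0 = c ∧ TL θ (hs σ) 0 = K := by
    intro c K hK
    have hKs : K ⊆ θ.subf := by
      obtain ⟨π, -, rfl⟩ := hK
      exact HH_sub θ π
    have hHm : ∀ c, HH θ (rep c) ∈ θ.subf.powerset := fun c => Finset.mem_powerset.2 (HH_sub θ _)
    let τ : ℕ → C := fun t => Nat.rec (nxt c ⟨K, Finset.mem_powerset.2 hKs⟩)
      (fun _ c' => nxt c' ⟨HH θ (rep c'), hHm c'⟩) t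
    let sq : ℕ → C := fun t => Nat.casesOn t c (fun s => τ s)
    let g : ℕ → Finset Form := fun t => Nat.casesOn t K (fun s => HH θ (rep (τ s)))
    have hgs : ∀ t, g t ∈ θ.subf.powerset := by
      intro t
      cases t with
      | zero => exact Finset.mem_powerset.2 hKs
      | succ t => exact hHm _
    have hsq : ∀ t, sq (t+1) = nxt (sq t) ⟨g t, hgs t⟩ := by
      intro t
      cases t <;> rfl
    let σ : T'.Path := ⟨sq, fun t => ⟨_, hsq t⟩⟩
    refine ⟨σ, rfl, ?_⟩
    have hgr : ∀ t, Rlz θ T ((rep (sq t)).seq 0) (g t) := by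
      intro t
      cases t with
      | zero => exact hK
      | succ t => exact ⟨_, rfl, rfl⟩
    have hgn : ∀ t, g (t+1) = HH θ (rep (sq (t+1))) := fun t => rfl
    have hloc : ∀ t, ∀ ψ ∈ θ.subf, Loc (hs σ t) (g t) (g (t+1)) ψ := by
      intro t ψ hψ
      rw [hgn, hsq t, hlabH]
      have h1 := HH_loc θ (wit θ (rep (sq t)) (g t)) ψ hψ
      have h2 := Loc_congr θ _ (rep (sq t)) (wit_zero θ _ _) _ _ _ h1
      rw [wit_HH θ _ _ (hgr t)] at h2
      exact h2
    have hfair : ∀ t, ∀ e ∈ θ.subf, ∃ s ≥ t, ¬ pend (g s) e := by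
      intro t e he
      obtain ⟨s, hs⟩ := hE (fun s => sq (t + 1 + s)) (fun s => ⟨g (t + 1 + s), hgs _⟩)
        (fun s => hsq (t + 1 + s)) (fun s => by
          have : t + 1 + s = t + s + 1 := by omega
          simp only [this]
          exact hgn (t + s)) e he
      refine ⟨t + s + 1, by omega, ?_⟩
      rw [hgn, show t + s + 1 = t + 1 + s by omega]
      exact hs
    have hu := TL_unique θ (hs σ) g hloc hfair
    ext ψ
    simp only [TL, Finset.mem_filter]
    constructor
    · rintro ⟨h1, h2⟩; exact (hu ψ h1 0).2 h2
    · intro h; exact ⟨hKs h, (hu ψ (hKs h) 0).1 h⟩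
  -- truth lemma
  have truth : ∀ ψ, ψ ∈ θ.subf → ∀ (σ : T'.Path) (t : ℕ),
      (Sat T' (σ.suffix t) ψ ↔ SatL (hs σ) t ψ) := by
    intro ψ
    induction ψ with
    | tt | ff => intro hψ σ t; simp [Sat, SatL]
    | prop p | nprop p => intro hψ σ t; simp [Sat, SatL, hs, HH, hψ, T', TS.Path.suffix]
    | or a b iha ihb =>
      intro hψ σ t
      obtain ⟨ha, hb⟩ := mem_sub2 Form.or rfl hψ
      simp [Sat, SatL, iha ha, ihb hb]
    | and a b iha ihb =>
      intro hψ σ t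
      obtain ⟨ha, hb⟩ := mem_sub2 Form.and rfl hψ
      simp [Sat, SatL, iha ha, ihb hb]
    | next a iha =>
      intro hψ σ t
      have ha := mem_sub1 Form.next rfl hψ
      simp [Sat, SatL, suffix_suffix, iha ha]
    | unt a b iha ihb =>
      intro hψ σ t
      obtain ⟨ha, hb⟩ := mem_sub2 Form.unt rfl hψ
      simp [Sat, SatL, suffix_suffix, iha ha, ihb hb]
    | rel a b iha ihb =>
      intro hψ σ t
      obtain ⟨ha, hb⟩ := mem_sub2 Form.rel rfl hψ
      simp [Sat, SatL, suffix_suffix, iha ha, ihb hb]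
    | ex a iha =>
      intro hψ σ t
      have ha := mem_sub1 Form.ex rfl hψ
      have ih0 : ∀ τ : T'.Path, Sat T' τ a ↔ a ∈ TL θ (hs τ) 0 := by
        intro τ
        have := iha ha τ 0
        rw [suffix_zero] at this
        rw [this]; simp [TL, ha]
      have e1 : SatL (hs σ) t (.ex a) ↔ ∃ π' : T.Path, π'.seq 0 = (rep (σ.seq t)).seq 0 ∧
          Sat T π' a := by
        simp [SatL, hs, HH, hψ, Sat]
      rw [e1]
      simp only [Sat]
      constructor
      · rintro ⟨τ, h0, h⟩
        rw [ih0] at h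
        obtain ⟨π', h1, h2⟩ := claim1 τ
        refine ⟨π', ?_, ?_⟩
        · rw [h1, h0]; rfl
        · rw [← h2] at h; exact (Finset.mem_filter.1 h).2
      · rintro ⟨π', h0, h⟩
        obtain ⟨τ, h1, h2⟩ := claim2 (σ.seq t) (HH θ π') ⟨π', h0, rfl⟩
        refine ⟨τ, h1, ?_⟩
        rw [ih0, h2]
        exact Finset.mem_filter.2 ⟨ha, h⟩
    | al a iha =>
      intro hψ σ t
      have ha := mem_sub1 Form.al rfl hψ
      have ih0 : ∀ τ : T'.Path, Sat T' τ a ↔ a ∈ TL θ (hs τ) 0 := by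
        intro τ
        have := iha ha τ 0
        rw [suffix_zero] at this
        rw [this]; simp [TL, ha]
      have e1 : SatL (hs σ) t (.al a) ↔ ∀ π' : T.Path, π'.seq 0 = (rep (σ.seq t)).seq 0 →
          Sat T π' a := by
        simp [SatL, hs, HH, hψ, Sat]
      rw [e1]
      simp only [Sat]
      constructor
      · intro H π' h0
        obtain ⟨τ, h1, h2⟩ := claim2 (σ.seq t) (HH θ π') ⟨π', h0, rfl⟩
        have h3 := H τ h1
        rw [ih0, h2] at h3
        exact (Finset.mem_filter.1 h3).2
      · intro H τ h0
        rw [ih0]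
        obtain ⟨π', h1, h2⟩ := claim1 τ
        rw [← h2]
        refine Finset.mem_filter.2 ⟨ha, H π' ?_⟩
        rw [h1, h0]; rfl
  obtain ⟨σ, h1, h2⟩ := claim2 c0 (HH θ (rep c0)) ⟨_, rfl, rfl⟩
  refine ⟨C, hC, T', σ, h1, ?_, hcard, ?_⟩
  · have h3 := truth θ (self_mem_subf θ) σ 0
    rw [suffix_zero] at h3
    rw [h3]
    have h4 : θ ∈ TL θ (hs σ) 0 := by
      rw [h2, hc0]
      exact Finset.mem_filter.2 ⟨self_mem_subf θ, hsat⟩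
    exact (Finset.mem_filter.1 h4).2
  · intro s
    have h5 : {t : C | T'.step s t} = Set.range (nxt s) := by
      ext t
      simp only [T', Set.mem_ofPred_eq, Set.mem_range]
      exact ⟨fun ⟨d, h⟩ => ⟨d, h.symm⟩, fun ⟨d, h⟩ => ⟨d, h.symm⟩⟩
    rw [h5, ← Set.image_univ]
    refine (Set.ncard_image_le Set.finite_univ).trans ?_
    rw [Set.ncard_univ, Nat.card_eq_fintype_card]
    simp

end Model

/-- **Corollary (small model property).** There is a constant `c > 0` such that any
satisfiable CTL* formula `θ` has a model of size at most `2^(2^(c·|θ|))` and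
branching-width at most `2^|θ|`. -/
theorem ctlstar_small_model_exponential_branching :
    ∃ c : ℕ, 0 < c ∧ ∀ θ : Form, IsStateForm θ → Satisfiable θ →
      ∃ (S : Type), Finite S ∧ ∃ (T : TS S) (π : T.Path),
        π.seq 0 = T.init ∧ Sat T π θ ∧
        Nat.card S ≤ 2 ^ 2 ^ (c * θ.subf.card) ∧
        ∀ s : S, {t : S | T.step s t}.ncard ≤ 2 ^ θ.subf.card := by
  refine ⟨8, by norm_num, ?_⟩
  rintro θ - ⟨S, T, π, -, hsat⟩
  exact small_model θ T π hsat
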